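/- arXiv:1703.10986 — 5 statements merged into one kernel-verified Lean document; each statement's English description precedes it below -/
import Mathlib

section
/- If q ∈ 𝕊 is a non-real coquaternion with dv(q) > 0, then q is similar to the complex number re(q) + √(dv(q)) i, i.e. there exists an invertible h ∈ 𝕊 such that h⁻¹ q h = re(q) + √(dv(q)) i. -/
open Quaternion Polynomial

noncomputable section

/-- The real algebra of coquaternions (split quaternions):
basis `1, i, j, k` with `i² = -1`, `j² = k² = 1`, `ij = -ji = k`. -/
abbrev CoQ : Type := ℍ[ℝ, -1, 1]

/-- The determinant of a coquaternion: `det q = q₀² + q₁² - q₂² - q₃²` (equals `q * star q`). -/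
def coDet (q : CoQ) : ℝ := q.re ^ 2 + q.imI ^ 2 - q.imJ ^ 2 - q.imK ^ 2

/-- The determinant of the vector part of a coquaternion: `dv q = q₁² - q₂² - q₃²`. -/
def coDv (q : CoQ) : ℝ := q.imI ^ 2 - q.imJ ^ 2 - q.imK ^ 2

lemma aux_sim (q p h : CoQ) (hd : coDet h ≠ 0) (e : q * h = h * p) :
    ∃ u : CoQˣ, (↑u⁻¹ : CoQ) * q * ↑u = p := by
  have h1 : h * ((coDet h)⁻¹ • star h) = 1 := by
    ext <;> simp <;> field_simp <;> simp only [coDet] <;> first | ring1 | exact Or.inr (by ring1)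
  have h2 : ((coDet h)⁻¹ • star h) * h = 1 := by
    ext <;> simp <;> field_simp <;> simp only [coDet] <;> first | ring1 | exact Or.inr (by ring1)
  refine ⟨⟨h, (coDet h)⁻¹ • star h, h1, h2⟩, ?_⟩
  change ((coDet h)⁻¹ • star h) * q * h = p
  rw [mul_assoc, e, ← mul_assoc, h2, one_mul]

/-- A non-real coquaternion with `dv q > 0` is similar to the complex number
`re q + √(dv q) i`. -/
theorem stmt_2 (q : CoQ) (hq : ¬(q.imI = 0 ∧ q.imJ = 0 ∧ q.imK = 0))
    (hdv : 0 < coDv q) :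
    ∃ u : CoQˣ, (↑u⁻¹ : CoQ) * q * ↑u = (⟨q.re, Real.sqrt (coDv q), 0, 0⟩ : CoQ) := by
  have hs : 0 < Real.sqrt (coDv q) := Real.sqrt_pos.mpr hdv
  have hs2 : Real.sqrt (coDv q) ^ 2 = q.imI ^ 2 - q.imJ ^ 2 - q.imK ^ 2 :=
    Real.sq_sqrt hdv.le
  generalize Real.sqrt (coDv q) = s at hs hs2
  obtain ⟨a, b, c, d⟩ := q
  simp only at hs2 ⊢
  rcases le_or_gt 0 b with hb | hb
  · apply aux_sim _ _ ⟨s + b, 0, -d, c⟩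
    · have : coDet ⟨s + b, 0, -d, c⟩ = 2 * (s * (s + b)) := by
        simp only [coDet]; linear_combination -hs2
      rw [this]; positivity
    · ext <;> simp <;> linarith
  · apply aux_sim _ _ ⟨d, -c, s - b, 0⟩
    · have : coDet ⟨d, -c, s - b, 0⟩ = -(2 * (s * (s - b))) := by
        simp only [coDet]; linear_combination hs2
      have h3 : 0 < s - b := by linarith
      rw [this]; exact neg_ne_zero.mpr (by positivity)
    · ext <;> simp <;> linarith
end
end

section
/- If q ∈ 𝕊 is a non-real coquaternion with dv(q) = 0, then q is similar to the dual number re(q) + i + j, i.e. there exists an invertible h ∈ 𝕊 such that h⁻¹ q h = re(q) + i + j. -/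
open Quaternion Polynomial

noncomputable section

theorem co_aux (q m h : CoQ) (hd : coDet h ≠ 0) (e : q * h = h * m) :
    ∃ u : CoQˣ, (↑u⁻¹ : CoQ) * q * ↑u = m := by
  have h1 : h * ((coDet h)⁻¹ • star h) = 1 := by
    ext <;> simp <;> field_simp <;> simp only [coDet] <;> first | (right; ring1) | ring1
  have h2 : ((coDet h)⁻¹ • star h) * h = 1 := by
    ext <;> simp <;> field_simp <;> simp only [coDet] <;> first | (right; ring1) | ring1
  refine ⟨⟨h, (coDet h)⁻¹ • star h, h1, h2⟩, ?_⟩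
  change ((coDet h)⁻¹ • star h) * q * h = m
  rw [mul_assoc, e, ← mul_assoc, h2, one_mul]

/-- A non-real coquaternion with `dv q = 0` is similar to the dual number
`re q + i + j`. -/
theorem stmt_4 (q : CoQ) (hq : ¬(q.imI = 0 ∧ q.imJ = 0 ∧ q.imK = 0))
    (hdv : coDv q = 0) :
    ∃ u : CoQˣ, (↑u⁻¹ : CoQ) * q * ↑u = (⟨q.re, 1, 1, 0⟩ : CoQ) := by
  obtain ⟨r, a, b, c⟩ := q
  simp only [coDv] at hq hdv ⊢
  by_cases hab : a = b
  · subst hab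
    have hc : c = 0 := by
      have : c ^ 2 = 0 := by linarith
      exact pow_eq_zero_iff (two_ne_zero) |>.1 this
    subst hc
    have ha : a ≠ 0 := fun h => hq ⟨h, h, rfl⟩
    refine co_aux _ _ ⟨a + 1, 0, 0, a - 1⟩ ?_ ?_
    · simp only [coDet]
      intro h
      apply ha
      linarith
    · ext <;> simp <;> ring
  · refine co_aux _ _ ⟨0, a + 1, b + 1, c⟩ ?_ ?_
    · simp only [coDet]
      intro h
      apply hab
      linarith
    · ext <;> simp <;> linarith
end
end

section
/- Two non-real coquaternions p, q ∈ 𝕊 are similar (there exists an invertible h ∈ 𝕊 with q = h⁻¹ p h) if and only if re(p) = re(q) and dv(p) = dv(q). -/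
open Quaternion Polynomial

noncomputable section

theorem coDet_mul' (a b : CoQ) : coDet (a * b) = coDet a * coDet b := by
  simp [coDet]; ring

theorem re_mul_comm' (a b : CoQ) : (a * b).re = (b * a).re := by
  simp; ring

theorem sim_of_intertwine (p q h : CoQ) (hd : coDet h ≠ 0) (e : p * h = h * q) :
    ∃ u : CoQˣ, q = (↑u⁻¹ : CoQ) * p * ↑u := by
  have h1 : h * ((coDet h)⁻¹ • star h) = 1 := by
    have : h * star h = ((coDet h : ℝ) : CoQ) := by
      ext <;> simp <;> (try simp only [coDet]) <;> ring
    rw [mul_smul_comm, this, QuaternionAlgebra.smul_coe, inv_mul_cancel₀ hd]; rfl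
  have h2 : ((coDet h)⁻¹ • star h) * h = 1 := by
    have : star h * h = ((coDet h : ℝ) : CoQ) := by
      ext <;> simp <;> (try simp only [coDet]) <;> ring
    rw [smul_mul_assoc, this, QuaternionAlgebra.smul_coe, inv_mul_cancel₀ hd]; rfl
  refine ⟨⟨h, _, h1, h2⟩, ?_⟩
  change q = ((coDet h)⁻¹ • star h) * p * h
  rw [mul_assoc, e, ← mul_assoc, h2, one_mul]

theorem intertwine (p q c : CoQ) (hr : p.re = q.re) (hd : coDv p = coDv q) :
    p * (p.im * c + c * q.im) = (p.im * c + c * q.im) * q := by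
  simp only [coDv] at hd
  ext <;> simp [hr]
  · linear_combination (-c.re) * hd
  · linear_combination (-c.imI) * hd
  · linear_combination (-c.imJ) * hd
  · linear_combination (-c.imK) * hd

/-- Two non-real coquaternions are similar iff they have the same real part and the
same determinant of the vector part. -/
theorem stmt_5 (p q : CoQ)
    (hp : ¬(p.imI = 0 ∧ p.imJ = 0 ∧ p.imK = 0))
    (hq : ¬(q.imI = 0 ∧ q.imJ = 0 ∧ q.imK = 0)) :
    (∃ u : CoQˣ, q = (↑u⁻¹ : CoQ) * p * ↑u) ↔ (p.re = q.re ∧ coDv p = coDv q) := by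
  constructor
  · rintro ⟨u, hu⟩
    have hr : p.re = q.re := by
      rw [hu, re_mul_comm', ← mul_assoc, Units.mul_inv, one_mul]
    have hd : coDet p = coDet q := by
      have h1 : coDet (↑u⁻¹ : CoQ) * coDet (u : CoQ) = 1 := by
        rw [← coDet_mul', Units.inv_mul]; simp [coDet]
      rw [hu, coDet_mul', coDet_mul']
      linear_combination (-coDet p) * h1
    refine ⟨hr, ?_⟩
    simp only [coDet, coDv] at *
    rw [hr] at hd
    linarith
  · rintro ⟨hr, hd⟩
    by_contra hn
    have key : ∀ c : CoQ, coDet (p.im * c + c * q.im) = 0 := by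
      intro c
      by_contra hc
      exact hn (sim_of_intertwine p q _ hc (intertwine p q c hr hd))
    have k1 := key ⟨1, 0, 0, 0⟩
    have k2 := key ⟨0, 1, 0, 0⟩
    have k3 := key ⟨0, 0, 1, 0⟩
    have k4 := key ⟨0, 0, 0, 1⟩
    simp [coDet] at k1 k2 k3 k4
    simp only [coDv] at hd
    have a0 : p.imI ^ 2 - p.imJ ^ 2 - p.imK ^ 2 = 0 := by linarith
    have b0 : q.imI ^ 2 - q.imJ ^ 2 - q.imK ^ 2 = 0 := by linarith
    have a1 : p.imI * q.imI = 0 := by linarith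
    rcases mul_eq_zero.mp a1 with h | h
    · apply hp
      rw [h] at a0
      refine ⟨h, ?_, ?_⟩ <;> nlinarith
    · apply hq
      rw [h] at b0
      refine ⟨h, ?_, ?_⟩ <;> nlinarith
end
end

section
/- Let P be a monic unilateral polynomial of degree n over the coquaternions 𝕊. Then the zeros of P belong to at most n(2n−1) quasi-similarity classes; precisely, the set {(re(z), det(z)) ∈ ℝ² : z ∈ 𝕊, P(z) = 0} is finite and has at most n(2n−1) elements. -/
open Quaternion Polynomial

noncomputable section

/-- Matrix representation of the coquaternions. -/
def coPhi : CoQ →+* Matrix (Fin 2) (Fin 2) ℝ where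
  toFun q := !![q.re + q.imJ, q.imI - q.imK; -q.imI - q.imK, q.re - q.imJ]
  map_one' := by
    ext i j; fin_cases i <;> fin_cases j <;> simp
  map_zero' := by
    ext i j; fin_cases i <;> fin_cases j <;> simp
  map_add' a b := by
    ext i j; fin_cases i <;> fin_cases j <;> simp <;> ring
  map_mul' a b := by
    ext i j; fin_cases i <;> fin_cases j <;> simp [Matrix.mul_apply, Fin.sum_univ_two] <;> ring

def coM : Polynomial CoQ →+* Matrix (Fin 2) (Fin 2) (Polynomial ℝ) :=
  ((matPolyEquiv (R := ℝ) (n := Fin 2)).symm : _ →+* _).comp (Polynomial.mapRingHom coPhi)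

lemma coM_coeff (P : Polynomial CoQ) (i j : Fin 2) (k : ℕ) :
    (coM P i j).coeff k = coPhi (P.coeff k) i j := by
  have := matPolyEquiv_coeff_apply (coM P) k i j
  rw [← this]
  simp [coM]

lemma co_factor (P : Polynomial CoQ) (z : CoQ) :
    ∃ Q : Polynomial CoQ, P - C (P.eval z) = Q * (X - C z) := by
  induction P using Polynomial.induction_on' with
  | add p q hp hq =>
    obtain ⟨a, ha⟩ := hp
    obtain ⟨b, hb⟩ := hq
    refine ⟨a + b, ?_⟩
    rw [add_mul, ← ha, ← hb, eval_add, C_add]; abel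
  | monomial k c =>
    have hc : Commute (X : Polynomial CoQ) (C z) := X_mul_C z |>.trans rfl
    refine ⟨C c * ∑ i ∈ Finset.range k, X ^ i * (C z) ^ (k - 1 - i), ?_⟩
    rw [mul_assoc, hc.geom_sum₂_mul, eval_monomial, ← C_mul_X_pow_eq_monomial, mul_sub, C_mul, C_pow]

/-- Characteristic polynomial. -/
def coChi (p : ℝ × ℝ) : Polynomial ℝ := X ^ 2 - C (2 * p.1) * X + C p.2

lemma coChi_monic (p : ℝ × ℝ) : (coChi p).Monic := by
  unfold coChi; monicity!

lemma coChi_natDegree (p : ℝ × ℝ) : (coChi p).natDegree = 2 := by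
  unfold coChi; compute_degree!

lemma coChi_inj {p q : ℝ × ℝ} (h : coChi p = coChi q) : p = q := by
  have h0 := congrArg (fun f => eval 0 f) h
  have h1 := congrArg (fun f => eval 1 f) h
  simp [coChi] at h0 h1
  ext <;> linarith

lemma coM_linear (z : CoQ) : (coM (X - C z)).det = coChi (z.re, coDet z) := by
  have h : ∀ i j, coM (X - C z) i j = (if i = j then X else 0) - C (coPhi z i j) := by
    intro i j
    ext k
    rw [coM_coeff, coeff_sub, coeff_sub, map_sub, coeff_X, coeff_C, coeff_C]
    split_ifs <;> simp_all [coeff_X, Matrix.one_apply]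
  rw [Matrix.det_fin_two]
  simp only [h]
  simp [coPhi, coChi, coDet, C_ofNat]
  ring

lemma co_dvd {P : Polynomial CoQ} {z : CoQ} (h : P.eval z = 0) :
    coChi (z.re, coDet z) ∣ (coM P).det := by
  obtain ⟨Q, hQ⟩ := co_factor P z
  rw [h, C_0, sub_zero] at hQ
  rw [hQ, map_mul, Matrix.det_mul, coM_linear]
  exact dvd_mul_left _ _

lemma coM_natDegree (P : Polynomial CoQ) (i j : Fin 2) :
    (coM P i j).natDegree ≤ P.natDegree := by
  rw [natDegree_le_iff_coeff_eq_zero]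
  intro k hk
  rw [coM_coeff, coeff_eq_zero_of_natDegree_lt hk]; simp

lemma coM_det_natDegree (P : Polynomial CoQ) :
    (coM P).det.natDegree ≤ 2 * P.natDegree := by
  rw [Matrix.det_fin_two, two_mul]
  refine (natDegree_sub_le _ _).trans (max_le ?_ ?_) <;>
  exact natDegree_mul_le_of_le (coM_natDegree _ _ _) (coM_natDegree _ _ _)

lemma coM_det_ne (P : Polynomial CoQ) (hP : P.Monic) : (coM P).det ≠ 0 := by
  intro h
  have h2 := congrArg (fun f => coeff f (P.natDegree + P.natDegree)) h
  simp only [Matrix.det_fin_two, coeff_sub,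
    coeff_mul_add_eq_of_natDegree_le (coM_natDegree P _ _) (coM_natDegree P _ _), coM_coeff,
    hP.coeff_natDegree, map_one] at h2
  simp at h2

/-- The zeros of a monic coquaternionic polynomial of degree `n` belong to at most
`n(2n-1)` quasi-similarity classes (classes are identified with pairs
`(re z, det z)`). -/
theorem stmt_12 (P : Polynomial CoQ) (n : ℕ) (hmonic : P.Monic)
    (hdeg : P.natDegree = n) :
    {p : ℝ × ℝ | ∃ z : CoQ, P.eval z = 0 ∧ p = (z.re, coDet z)}.Finite ∧
    {p : ℝ × ℝ | ∃ z : CoQ, P.eval z = 0 ∧ p = (z.re, coDet z)}.ncard ≤ n * (2 * n - 1) := by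
  classical
  set S := {p : ℝ × ℝ | ∃ z : CoQ, P.eval z = 0 ∧ p = (z.re, coDet z)} with hS
  let D : Polynomial ℂ := (coM P).det.map (algebraMap ℝ ℂ)
  have hD : D ≠ 0 := (Polynomial.map_ne_zero_iff (algebraMap ℝ ℂ).injective).2 (coM_det_ne P hmonic)
  have hcard : D.roots.card ≤ 2 * n := by
    refine (card_roots' D).trans ?_
    rw [← hdeg]
    exact natDegree_map_le.trans (coM_det_natDegree P)
  let T : Finset (Multiset ℂ) := (D.roots.powersetCard 2).toFinset
  let f : ℝ × ℝ → Multiset ℂ := fun p => ((coChi p).map (algebraMap ℝ ℂ)).roots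
  have hsplit : ∀ p, ((coChi p).map (algebraMap ℝ ℂ)).Splits := fun p => IsAlgClosed.splits _
  have hmon : ∀ p, ((coChi p).map (algebraMap ℝ ℂ)).Monic := fun p => (coChi_monic p).map _
  have hmaps : ∀ p ∈ S, f p ∈ (T : Set (Multiset ℂ)) := by
    rintro p ⟨z, hz, rfl⟩
    simp only [T, f, Finset.mem_coe, Multiset.mem_toFinset, Multiset.mem_powersetCard]
    refine ⟨roots.le_of_dvd hD (Polynomial.map_dvd _ (co_dvd hz)), ?_⟩
    rw [← (hsplit _).natDegree_eq_card_roots, natDegree_map, coChi_natDegree]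
  have hinj : Set.InjOn f S := by
    intro p _ q _ h
    apply coChi_inj
    apply Polynomial.map_injective _ (algebraMap ℝ ℂ).injective
    rw [(hsplit p).eq_prod_roots_of_monic (hmon p), (hsplit q).eq_prod_roots_of_monic (hmon q)]
    simp only [f] at h
    rw [h]
  refine ⟨Set.Finite.of_injOn hmaps hinj T.finite_toSet, ?_⟩
  refine (Set.ncard_le_ncard_of_injOn f hmaps hinj T.finite_toSet).trans ?_
  rw [Set.ncard_coe_finset]
  refine (Multiset.toFinset_card_le _).trans ?_
  rw [Multiset.card_powersetCard]
  refine (Nat.choose_le_choose 2 hcard).trans ?_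
  rw [Nat.choose_two_right, mul_assoc, Nat.mul_div_cancel_left _ (by norm_num)]
end
end

section
/- Let B = b₀ + b₁ i + b₂ j + b₃ k ∈ 𝕊 with B ≠ 0 and det(B) = 0 (so b₀² + b₁² = b₂² + b₃² ≠ 0), and set k₁ = −(b₀b₂ + b₁b₃)/(b₀² + b₁²) and k₂ = (b₁b₂ − b₀b₃)/(b₀² + b₁²). Then for u ∈ 𝕊, B u = 0 if and only if there exist α, β ∈ ℝ such that u = α + β i + (k₁α + k₂β) j + (k₂α − k₁β) k. -/
open Quaternion Polynomial

noncomputable section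

/-- Description of the kernel of left multiplication by a nonzero singular
coquaternion `B`. -/
theorem stmt_16 (B : CoQ) (hB : B ≠ 0) (hdet : coDet B = 0)
    (k₁ k₂ : ℝ)
    (hk₁ : k₁ = -((B.re * B.imJ + B.imI * B.imK) / (B.re ^ 2 + B.imI ^ 2)))
    (hk₂ : k₂ = (B.imI * B.imJ - B.re * B.imK) / (B.re ^ 2 + B.imI ^ 2))
    (u : CoQ) :
    B * u = 0 ↔ ∃ α β : ℝ, u = (⟨α, β, k₁ * α + k₂ * β, k₂ * α - k₁ * β⟩ : CoQ) := by
  obtain ⟨a, b, c, d⟩ := B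
  obtain ⟨p, q, r, s⟩ := u
  simp only [coDet] at hdet hk₁ hk₂
  have hN : a ^ 2 + b ^ 2 ≠ 0 := by
    intro h
    apply hB
    have ha : a = 0 := by nlinarith [sq_nonneg a, sq_nonneg b]
    have hb : b = 0 := by nlinarith [sq_nonneg a, sq_nonneg b]
    have hc : c = 0 := by nlinarith [sq_nonneg c, sq_nonneg d]
    have hd : d = 0 := by nlinarith [sq_nonneg c, sq_nonneg d]
    subst ha hb hc hd
    rfl
  have h1 : k₁ * (a ^ 2 + b ^ 2) = -(a * c + b * d) := by
    rw [hk₁]; field_simp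
  have h2 : k₂ * (a ^ 2 + b ^ 2) = b * c - a * d := by
    rw [hk₂]; field_simp
  clear hk₁ hk₂ hB
  have e1 : a * k₁ - b * k₂ = -c := by
    apply mul_right_cancel₀ hN; linear_combination a * h1 - b * h2
  have e2 : a * k₂ + b * k₁ = -d := by
    apply mul_right_cancel₀ hN; linear_combination a * h2 + b * h1
  have e3 : c * k₁ + d * k₂ = -a := by
    apply mul_right_cancel₀ hN; linear_combination c * h1 + d * h2 + a * hdet
  have e4 : d * k₁ - c * k₂ = -b := by
    apply mul_right_cancel₀ hN; linear_combination d * h1 - c * h2 + b * hdet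
  constructor
  · intro h
    have hJ := congrArg QuaternionAlgebra.imJ h
    have hK := congrArg QuaternionAlgebra.imK h
    simp at hJ hK
    refine ⟨p, q, ?_⟩
    ext
    · rfl
    · rfl
    · apply mul_right_cancel₀ hN
      simp only
      linear_combination a * hJ + b * hK - p * h1 - q * h2
    · apply mul_right_cancel₀ hN
      simp only
      linear_combination a * hK - b * hJ - p * h2 + q * h1
  · rintro ⟨α, β, h⟩
    rw [h]
    ext
    · simp
      linear_combination α * e3 - β * e4
    · simp
      linear_combination α * e4 + β * e3
    · simp
      linear_combination α * e1 + β * e2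
    · simp
      linear_combination α * e2 - β * e1
end
end
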